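/- Let μ > 0 and let f be a classical solution of the BDY PDE on [0,∞) × [0,∞) which is strictly positive, is for each t a probability density with mean μ, and is such that f ln f and (∂_v f)²/f are integrable on (0,∞) for each t, with ∂_v f(v,t) ln f(v,t) → 0 and f(v,t) ln f(v,t) → 0 as v → ∞, and such that the relative entropy H[f|f∞](t) is differentiable in t with derivative obtained by differentiating under the integral sign. Then for all t ≥ 0: d/dt H[f|f∞](t) = − D[f](t), where D[f](t) = ∫₀^∞ ( ∂_v f(v,t) + f(0,t) f(v,t) )² / f(v,t) dv ≥ 0. In particular, the relative entropy with respect to the Boltzmann–Gibbs equilibrium decreases monotonically in time. -/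

import Mathlib

open MeasureTheory Set Filter

/-
Integrating `∂_t f = ∂_v (∂_v f + f(0,t) f)` by parts against `ln (f / f∞) + 1` gives `-D[f]`. To
avoid any decay at infinity this is done against the cut-off `(1 - v / R)²`, with an error
`O(1 / R)` controlled by the mass, the mean and the entropy.

The differentiated entropy integrand need not be integrable, in which case its Bochner integral is
the junk value `0`; hence at each time the derivative `V` of the relative entropy is `0` or `-D`.
Suppose `V(t₀) = 0 ≠ -D(t₀)`. By the Cauchy–Schwarz inequality `D` dominates the squared increments
in `v` of an antiderivative of the flux which is continuous in time, so `D` stays away from `0`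
near `t₀`, and Darboux's theorem forces `V = 0` there: the entropy is constant on an interval. But
`t ↦ ‖∂_t f(·,t)‖_{L¹}` is finite and lower semicontinuous, hence by Baire bounded on some
subinterval. There the cut-off balance may be integrated in time by Fubini, and `R → ∞` shows that
the entropy strictly decreases, a contradiction.
-/

namespace BDY

open scoped ENNReal Topology

section Increments

variable {E : Type*} [NormedAddCommGroup E] [NormedSpace ℝ E] [CompleteSpace E]

lemma enorm_sub_le_setLIntegral_enorm_deriv {G : ℝ → E} {a b : ℝ} (hab : a ≤ b)
    (hG : ∀ v ∈ Icc a b, DifferentiableAt ℝ G v) :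
    ‖G b - G a‖ₑ ≤ ∫⁻ v in Ioc a b, ‖deriv G v‖ₑ := by
  obtain hfin | hfin := lt_or_ge (∫⁻ v in Ioc a b, ‖deriv G v‖ₑ) ∞
  · have hint : IntervalIntegrable (deriv G) volume a b := by
      rw [intervalIntegrable_iff_integrableOn_Ioc_of_le hab]
      exact ⟨aestronglyMeasurable_deriv G _, hfin⟩
    rw [← intervalIntegral.integral_deriv_eq_sub (fun v hv => hG v (uIcc_of_le hab ▸ hv)) hint,
      intervalIntegral.integral_of_le hab]
    exact enorm_integral_le_lintegral_enorm _
  · exact le_top.trans hfin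

lemma lintegral_enorm_increment_le {G : ℝ → E} (hG : ∀ v, 0 < v → DifferentiableAt ℝ G v)
    {h : ℝ} (hh : 0 ≤ h) :
    ∫⁻ v in Ioi 0, ‖G (v + h) - G v‖ₑ
      ≤ ENNReal.ofReal h * ∫⁻ v in Ioi 0, ‖deriv G v‖ₑ := by
  have hshift (v : ℝ) :
      ∫⁻ x in Ioc v (v + h), ‖deriv G x‖ₑ = ∫⁻ y in Ioc 0 h, ‖deriv G (v + y)‖ₑ := by
    have := (measurePreserving_add_left volume v).setLIntegral_comp_preimage_emb
      (measurableEmbedding_addLeft v) (fun x => ‖deriv G x‖ₑ) (Ioc v (v + h))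
    simpa using this.symm
  calc ∫⁻ v in Ioi 0, ‖G (v + h) - G v‖ₑ
      ≤ ∫⁻ v in Ioi 0, ∫⁻ y in Ioc 0 h, ‖deriv G (v + y)‖ₑ := by
        refine setLIntegral_mono' measurableSet_Ioi fun v (hv : 0 < v) => ?_
        rw [← hshift]
        exact enorm_sub_le_setLIntegral_enorm_deriv (by linarith)
          fun x hx => hG x (hv.trans_le hx.1)
    _ = ∫⁻ y in Ioc 0 h, ∫⁻ v in Ioi 0, ‖deriv G (v + y)‖ₑ :=
        lintegral_lintegral_swap <| ((stronglyMeasurable_deriv G).comp_measurable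
          (measurable_fst.add measurable_snd)).enorm.aemeasurable
    _ ≤ ∫⁻ _ in Ioc 0 h, ∫⁻ v in Ioi 0, ‖deriv G v‖ₑ := by
        refine setLIntegral_mono' measurableSet_Ioc fun y hy => ?_
        have := (measurePreserving_add_right volume y).setLIntegral_comp_preimage_emb
          (measurableEmbedding_addRight y) (fun x => ‖deriv G x‖ₑ) (Ioi y)
        simp only [preimage_add_const_Ioi, sub_self] at this
        exact this.trans_le (lintegral_mono_set (Ioi_subset_Ioi hy.1.le))
    _ = ENNReal.ofReal h * ∫⁻ v in Ioi 0, ‖deriv G v‖ₑ := by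
        rw [setLIntegral_const, Real.volume_Ioc, sub_zero, mul_comm]

lemma lintegral_enorm_deriv_le_iff {G : ℝ → E} (hG : ∀ v, 0 < v → DifferentiableAt ℝ G v)
    {C : ℝ≥0∞} :
    ∫⁻ v in Ioi 0, ‖deriv G v‖ₑ ≤ C ↔
      ∀ h, 0 < h → ∫⁻ v in Ioi 0, ‖G (v + h) - G v‖ₑ ≤ ENNReal.ofReal h * C := by
  refine ⟨fun hC h hh => (lintegral_enorm_increment_le hG hh.le).trans (by gcongr), fun hC => ?_⟩
  obtain ⟨h, -, hpos, hlim⟩ := exists_seq_strictAnti_tendsto (0 : ℝ)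
  have hmeas (n : ℕ) : AEMeasurable (fun v => ‖(h n)⁻¹ • (G (v + h n) - G v)‖ₑ)
      (volume.restrict (Ioi 0)) := by
    have hcont : ContinuousOn G (Ioi 0) := fun v hv =>
      (hG v hv).continuousAt.continuousWithinAt
    refine (((hcont.comp (by fun_prop) fun v hv => ?_).sub hcont).const_smul
      _).aestronglyMeasurable measurableSet_Ioi |>.enorm
    exact add_pos hv (hpos n)
  calc ∫⁻ v in Ioi 0, ‖deriv G v‖ₑ
      = ∫⁻ v in Ioi 0, liminf (fun n => ‖(h n)⁻¹ • (G (v + h n) - G v)‖ₑ) atTop := by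
        refine setLIntegral_congr_fun measurableSet_Ioi fun v hv => (Tendsto.liminf_eq ?_).symm
        exact ((hG v hv).hasDerivAt.tendsto_slope_zero.comp
          (tendsto_nhdsWithin_iff.2 ⟨hlim, .of_forall fun n => (hpos n).ne'⟩)).enorm
    _ ≤ liminf (fun n => ∫⁻ v in Ioi 0, ‖(h n)⁻¹ • (G (v + h n) - G v)‖ₑ) atTop :=
        lintegral_liminf_le' hmeas
    _ ≤ C := by
        refine liminf_le_of_le (by isBoundedDefault) fun c hc => ?_
        obtain ⟨n, hn⟩ := hc.exists
        refine hn.trans ?_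
        simp only [enorm_smul, enorm_inv (hpos n).ne', Real.enorm_of_nonneg (hpos n).le]
        rw [lintegral_const_mul' _ _ (by simp [hpos n]), ← ENNReal.div_eq_inv_mul]
        exact ENNReal.div_le_of_le_mul' (hC _ (hpos n))

lemma lintegral_enorm_deriv_deriv_le_iff {G : ℝ → E}
    (hG : ∀ v, 0 < v → DifferentiableAt ℝ G v)
    (hG' : ∀ v, 0 < v → DifferentiableAt ℝ (deriv G) v) {C : ℝ≥0∞} :
    ∫⁻ v in Ioi 0, ‖deriv (deriv G) v‖ₑ ≤ C ↔
      ∀ h, 0 < h → ∀ k, 0 < k →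
        ∫⁻ v in Ioi 0, ‖(G (v + k + h) - G (v + k)) - (G (v + h) - G v)‖ₑ
          ≤ ENNReal.ofReal k * (ENNReal.ofReal h * C) := by
  rw [lintegral_enorm_deriv_le_iff hG']
  refine forall₂_congr fun h hh => ?_
  have hshift (v : ℝ) (hv : 0 < v) : DifferentiableAt ℝ (fun w => G (w + h)) v :=
    differentiableAt_comp_add_const.2 (hG (v + h) (by positivity))
  have hderiv : ∫⁻ v in Ioi 0, ‖deriv G (v + h) - deriv G v‖ₑ =
      ∫⁻ v in Ioi 0, ‖deriv (fun w => G (w + h) - G w) v‖ₑ :=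
    setLIntegral_congr_fun measurableSet_Ioi fun v hv => by
      simp only [deriv_fun_sub (hshift v hv) (hG v hv), deriv_comp_add_const]
  rw [hderiv]
  exact lintegral_enorm_deriv_le_iff fun v hv => (hshift v hv).sub (hG v hv)

end Increments

lemma lowerSemicontinuous_lintegral {T α : Type*} [TopologicalSpace T] [FirstCountableTopology T]
    [MeasurableSpace α] {ν : Measure α} {g : T → α → ℝ≥0∞} (hm : ∀ s, AEMeasurable (g s) ν)
    (hg : ∀ᵐ x ∂ν, LowerSemicontinuous fun s => g s x) :
    LowerSemicontinuous fun s => ∫⁻ x, g s x ∂ν := by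
  rw [lowerSemicontinuous_iff_le_liminf]
  intro s
  calc ∫⁻ x, g s x ∂ν ≤ ∫⁻ x, liminf (fun s => g s x) (𝓝 s) ∂ν :=
        lintegral_mono_ae <| hg.mono fun x hx => hx.le_liminf s
    _ ≤ liminf (fun s => ∫⁻ x, g s x ∂ν) (𝓝 s) := lintegral_liminf_le' hm

lemma lowerSemicontinuous_lintegral_enorm_deriv_deriv {T E : Type*} [TopologicalSpace T]
    [FirstCountableTopology T] [NormedAddCommGroup E] [NormedSpace ℝ E] [CompleteSpace E]
    {u : T → ℝ → E} (hu : ∀ s v, 0 < v → DifferentiableAt ℝ (u s) v)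
    (hu' : ∀ s v, 0 < v → DifferentiableAt ℝ (deriv (u s)) v)
    (hcont : ∀ v, 0 < v → Continuous fun s => u s v) :
    LowerSemicontinuous fun s => ∫⁻ v in Ioi 0, ‖deriv (deriv (u s)) v‖ₑ := by
  rw [lowerSemicontinuous_iff_isClosed_preimage]
  intro C
  have hpre : (fun s => ∫⁻ v in Ioi 0, ‖deriv (deriv (u s)) v‖ₑ) ⁻¹' Iic C =
      ⋂ (h : ℝ) (_ : 0 < h) (k : ℝ) (_ : 0 < k),
        (fun s => ∫⁻ v in Ioi 0, ‖(u s (v + k + h) - u s (v + k)) - (u s (v + h) - u s v)‖ₑ) ⁻¹'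
          Iic (ENNReal.ofReal k * (ENNReal.ofReal h * C)) := by
    ext s
    simp only [mem_preimage, mem_Iic, mem_iInter]
    exact lintegral_enorm_deriv_deriv_le_iff (hu s) (hu' s)
  rw [hpre]
  refine isClosed_iInter fun h => isClosed_iInter fun hh => isClosed_iInter fun k =>
    isClosed_iInter fun hk => LowerSemicontinuous.isClosed_preimage
      (lowerSemicontinuous_lintegral (fun s => ?_) ?_) _
  · have hshift (c : ℝ) (hc : 0 ≤ c) : ContinuousOn (fun v => u s (v + c)) (Ioi 0) := fun v hv =>
      (differentiableAt_comp_add_const.2 (hu s (v + c)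
        (add_pos_of_pos_of_nonneg hv hc))).continuousAt.continuousWithinAt
    have hmixed := ((hshift (k + h) (by positivity)).sub (hshift k hk.le)).sub
      ((hshift h hh.le).sub (hshift 0 le_rfl))
    simp only [← add_assoc, add_zero] at hmixed
    exact (hmixed.aestronglyMeasurable measurableSet_Ioi).enorm
  · filter_upwards [ae_restrict_mem measurableSet_Ioi] with v (hv : 0 < v)
    exact (((hcont _ (by positivity)).sub (hcont _ (by positivity))).sub
      ((hcont _ (by positivity)).sub (hcont v hv))).enorm.lowerSemicontinuous

lemma exists_Icc_subset_forall_le_of_lowerSemicontinuous {g : ℝ → ℝ≥0∞}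
    (hg : LowerSemicontinuous g) (hfin : ∀ s, g s ≠ ∞) {a b : ℝ} (hab : a < b) :
    ∃ c d, c < d ∧ Icc c d ⊆ Ioo a b ∧ ∃ n : ℕ, ∀ s ∈ Icc c d, g s ≤ n := by
  have hcover : ⋃ n : ℕ, g ⁻¹' Iic (n : ℝ≥0∞) = univ := by
    refine eq_univ_of_forall fun s => mem_iUnion.2 ?_
    obtain ⟨n, hn⟩ := ENNReal.exists_nat_gt (hfin s)
    exact ⟨n, hn.le⟩
  obtain ⟨s, hs, hsab⟩ := (dense_iUnion_interior_of_closed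
    (fun n : ℕ => hg.isClosed_preimage n) hcover).exists_mem_open isOpen_Ioo (nonempty_Ioo.2 hab)
  obtain ⟨n, hn⟩ := mem_iUnion.1 hs
  obtain ⟨ε, hε, hball⟩ := Metric.nhds_basis_closedBall.mem_iff.1
    ((isOpen_interior.inter isOpen_Ioo).mem_nhds ⟨hn, hsab⟩)
  rw [Real.closedBall_eq_Icc] at hball
  exact ⟨s - ε, s + ε, by linarith, fun r hr => (hball hr).2, n,
    fun r hr => mem_preimage.1 (interior_subset (hball hr).1)⟩

lemma intervalIntegral_integral_eq_integral_sub {α : Type*} [MeasurableSpace α] {ν : Measure α}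
    [SFinite ν] {g g' : α → ℝ → ℝ} {a b : ℝ} (hab : a ≤ b)
    (hderiv : ∀ᵐ x ∂ν, ∀ s ∈ Icc a b, HasDerivAt (g x) (g' x s) s)
    (hint : Integrable (fun p : α × ℝ => g' p.1 p.2) (ν.prod (volume.restrict (Ioc a b)))) :
    ∫ s in a..b, ∫ x, g' x s ∂ν = ∫ x, (g x b - g x a) ∂ν := by
  rw [intervalIntegral.integral_of_le hab,
    ← integral_integral_swap (f := g') hint]
  refine integral_congr_ae ?_
  filter_upwards [hderiv, hint.prod_right_ae] with x hx hxint
  rw [← intervalIntegral.integral_of_le hab]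
  exact intervalIntegral.integral_eq_sub_of_hasDerivAt (fun s hs => hx s (uIcc_of_le hab ▸ hs))
    ((intervalIntegrable_iff_integrableOn_Ioc_of_le hab).2 hxint)

lemma sq_integral_le_integral_sq_div {α : Type*} [MeasurableSpace α] {ν : Measure α}
    {g ρ : α → ℝ} (hg : Integrable g ν) (hρ : Integrable ρ ν) (hρ_pos : ∀ᵐ x ∂ν, 0 < ρ x)
    (hρ_le : ∫ x, ρ x ∂ν ≤ 1) (hint : Integrable (fun x => g x ^ 2 / ρ x) ν) :
    (∫ x, g x ∂ν) ^ 2 ≤ ∫ x, g x ^ 2 / ρ x ∂ν := by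
  set M := ∫ x, g x ∂ν with hM
  have hle : ∫ x, (2 * M * g x - M ^ 2 * ρ x) ∂ν ≤ ∫ x, g x ^ 2 / ρ x ∂ν := by
    refine integral_mono_ae ((hg.const_mul _).sub (hρ.const_mul _)) hint ?_
    filter_upwards [hρ_pos] with x hx
    rw [le_div_iff₀ hx]
    linarith [sq_nonneg (g x - M * ρ x)]
  rw [integral_sub (hg.const_mul _) (hρ.const_mul _), integral_const_mul, integral_const_mul,
    ← hM] at hle
  nlinarith [sq_nonneg M]

lemma deriv_eq_zero_of_deriv_gap {g g' : ℝ → ℝ} {a b c : ℝ} (hab : a ≤ b) (hc : 0 < c)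
    (hg : ∀ s ∈ Icc a b, HasDerivAt g (g' s) s)
    (hgap : ∀ s ∈ Icc a b, g' s = 0 ∨ g' s ≤ -c) (ha : g' a = 0) :
    ∀ s ∈ Icc a b, g' s = 0 := by
  have hne : ∀ s ∈ Icc a b, g' s ≠ -c / 2 := fun s hs h => by
    rcases hgap s hs with h' | h' <;> linarith
  intro s hs
  rcases hasDerivWithinAt_forall_lt_or_forall_gt_of_forall_ne (convex_Icc a b)
    (fun s hs => (hg s hs).hasDerivWithinAt) hne with hlt | hgt
  · linarith [hlt a (left_mem_Icc.2 hab)]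
  · exact (hgap s hs).resolve_right fun h => by linarith [hgt s hs]

section Cutoff

/-- The weight `(1 - v / R) ^ 2`, used on `[0, R]`: it vanishes together with its derivative at
`R`, so that integrating by parts against it twice leaves no boundary terms at `R`. -/
noncomputable def cutoff (R v : ℝ) : ℝ := (1 - v / R) ^ 2

lemma continuous_cutoff (R : ℝ) : Continuous (cutoff R) := by
  unfold cutoff; fun_prop

lemma cutoff_nonneg (R v : ℝ) : 0 ≤ cutoff R v := sq_nonneg _

lemma abs_one_sub_div_le_one {R v : ℝ} (hv : 0 ≤ v) (hvR : v ≤ R) : |1 - v / R| ≤ 1 := by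
  have hR : 0 ≤ v / R := div_nonneg hv (hv.trans hvR)
  have hR1 : v / R ≤ 1 := div_le_one_of_le₀ hvR (hv.trans hvR)
  exact abs_le.2 ⟨by linarith, by linarith⟩

lemma abs_cutoff_le_one {R v : ℝ} (hv : 0 ≤ v) (hvR : v ≤ R) : |cutoff R v| ≤ 1 := by
  rw [cutoff, abs_pow]
  exact pow_le_one₀ (abs_nonneg _) (abs_one_sub_div_le_one hv hvR)

lemma one_sub_cutoff_le (R v : ℝ) : 1 - cutoff R v ≤ 2 / R * v := by
  have : 1 - cutoff R v = 2 / R * v - (v / R) ^ 2 := by unfold cutoff; ring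
  linarith [sq_nonneg (v / R)]

lemma abs_intervalIntegral_mul_le {g G : ℝ → ℝ} {R : ℝ} (hR : 0 ≤ R)
    (hg : ∀ v ∈ Ioc 0 R, |g v| ≤ 1) (hG : IntegrableOn G (Ioi 0)) :
    |∫ v in (0 : ℝ)..R, g v * G v| ≤ ∫ v in Ioi 0, |G v| := by
  rw [intervalIntegral.integral_of_le hR, ← Real.norm_eq_abs]
  calc ‖∫ v in Ioc 0 R, g v * G v‖ ≤ ∫ v in Ioc 0 R, |G v| := by
        refine norm_integral_le_of_norm_le (hG.mono_set Ioc_subset_Ioi_self).abs ?_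
        filter_upwards [ae_restrict_mem measurableSet_Ioc] with v hv
        rw [norm_mul]
        exact mul_le_of_le_one_left (norm_nonneg _) (hg v hv)
    _ ≤ ∫ v in Ioi 0, |G v| := setIntegral_mono_set hG.abs
        (.of_forall fun _ => abs_nonneg _) Ioc_subset_Ioi_self.eventuallyLE

lemma integral_cutoff_mul_eq_setIntegral_indicator {R : ℝ} (hR : 0 ≤ R) (G : ℝ → ℝ) :
    ∫ v in (0 : ℝ)..R, cutoff R v * G v =
      ∫ v in Ioi 0, (Ioc 0 R).indicator (fun v => cutoff R v * G v) v := by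
  rw [intervalIntegral.integral_of_le hR, setIntegral_indicator measurableSet_Ioc,
    inter_eq_self_of_subset_right Ioc_subset_Ioi_self]

lemma aestronglyMeasurable_indicator_cutoff_mul {G : ℝ → ℝ} (hG : IntegrableOn G (Ioi 0))
    (R : ℝ) : AEStronglyMeasurable ((Ioc 0 R).indicator fun v => cutoff R v * G v)
      (volume.restrict (Ioi 0)) :=
  ((continuous_cutoff R).aestronglyMeasurable.mul hG.1).indicator measurableSet_Ioc

lemma abs_indicator_cutoff_mul_le (R : ℝ) (G : ℝ → ℝ) (v : ℝ) :
    |(Ioc 0 R).indicator (fun v => cutoff R v * G v) v| ≤ |G v| := by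
  by_cases hv : v ∈ Ioc 0 R
  · rw [indicator_of_mem hv, abs_mul]
    exact mul_le_of_le_one_left (abs_nonneg _) (abs_cutoff_le_one hv.1.le hv.2)
  · rw [indicator_of_notMem hv, abs_zero]
    exact abs_nonneg _

lemma tendsto_integral_cutoff_mul {G : ℝ → ℝ} (hG : IntegrableOn G (Ioi 0)) :
    Tendsto (fun R => ∫ v in (0 : ℝ)..R, cutoff R v * G v) atTop (𝓝 (∫ v in Ioi 0, G v)) := by
  refine Tendsto.congr' ((eventually_ge_atTop (0 : ℝ)).mono fun R hR =>
    (integral_cutoff_mul_eq_setIntegral_indicator hR G).symm) ?_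
  refine tendsto_integral_filter_of_dominated_convergence (fun v => |G v|)
    (.of_forall (aestronglyMeasurable_indicator_cutoff_mul hG))
    (.of_forall fun R => .of_forall (abs_indicator_cutoff_mul_le R G)) hG.abs ?_
  filter_upwards [ae_restrict_mem measurableSet_Ioi] with v hv
  have hlim : Tendsto (fun R => cutoff R v * G v) atTop (𝓝 ((1 - 0) ^ 2 * G v)) :=
    ((tendsto_const_nhds.sub (tendsto_id.const_div_atTop v)).pow 2).mul_const _
  rw [sub_zero, one_pow, one_mul] at hlim
  refine hlim.congr' ((eventually_ge_atTop v).mono fun R hR => ?_)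
  have hmem : v ∈ Ioc 0 R := ⟨hv, hR⟩
  simp only [indicator_of_mem hmem]

end Cutoff

section Gibbs

/-- The Boltzmann–Gibbs density `f∞` of mean `μ`. -/
noncomputable def gibbs (μ v : ℝ) : ℝ := (1 / μ) * Real.exp (-v / μ)

/-- The integrand of the relative entropy of `F` with respect to `gibbs μ`. -/
noncomputable def entropyDensity (μ : ℝ) (F : ℝ → ℝ) (v : ℝ) : ℝ :=
  F v * Real.log (F v / gibbs μ v)

/-- The relative entropy `H[F|f∞]` on the half line with respect to `gibbs μ`. -/
noncomputable def relEntropy (μ : ℝ) (F : ℝ → ℝ) : ℝ := ∫ v in Ioi 0, entropyDensity μ F v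

variable {μ : ℝ}

lemma gibbs_pos (hμ : 0 < μ) (v : ℝ) : 0 < gibbs μ v := by unfold gibbs; positivity

lemma continuous_gibbs (μ : ℝ) : Continuous (gibbs μ) := by unfold gibbs; fun_prop

lemma integrableOn_gibbs (hμ : 0 < μ) : IntegrableOn (gibbs μ) (Ioi 0) := by
  have : gibbs μ = fun v => 1 / μ * Real.exp (-(1 / μ) * v) := by
    funext v; unfold gibbs; congr 2; ring
  rw [this]
  exact (integrableOn_exp_mul_Ioi (by simpa using hμ) 0).const_mul _

lemma integral_gibbs (hμ : 0 < μ) : ∫ v in Ioi 0, gibbs μ v = 1 := by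
  have : gibbs μ = fun v => 1 / μ * Real.exp (-(1 / μ) * v) := by
    funext v; unfold gibbs; congr 2; ring
  rw [this, integral_const_mul, integral_exp_mul_Ioi (by simpa using hμ) 0]
  simp [hμ.ne']

lemma log_div_gibbs (hμ : 0 < μ) {x : ℝ} (hx : 0 < x) (v : ℝ) :
    Real.log (x / gibbs μ v) = Real.log x + Real.log μ + v / μ := by
  rw [Real.log_div hx.ne' (gibbs_pos hμ v).ne', gibbs,
    Real.log_mul (one_div_pos.2 hμ).ne' (Real.exp_pos _).ne', Real.log_exp, one_div, Real.log_inv]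
  ring

lemma sub_le_mul_log_div {x m : ℝ} (hx : 0 < x) (hm : 0 < m) : x - m ≤ x * Real.log (x / m) := by
  have hlog : 1 - (x / m)⁻¹ ≤ Real.log (x / m) := Real.one_sub_inv_le_log_of_pos (by positivity)
  calc x - m = x * (1 - (x / m)⁻¹) := by field_simp
    _ ≤ x * Real.log (x / m) := by gcongr

lemma abs_mul_log_div_le {x m : ℝ} (hx : 0 < x) (hm : 0 < m) :
    |x * Real.log (x / m)| ≤ x * Real.log (x / m) + 2 * m := by
  have := sub_le_mul_log_div hx hm
  exact abs_le.2 ⟨by linarith, by linarith⟩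

end Gibbs

section Profile

/-- The part of being a time slice of a solution which does not involve time: a twice
differentiable, strictly positive probability density on the half line, of finite mean, entropy and
Fisher information, subject to the Robin condition. The functions `F'` and `F''` are its first two
derivatives. -/
structure IsProfile (F F' F'' : ℝ → ℝ) : Prop where
  hasDerivAt : ∀ v, 0 ≤ v → HasDerivAt F (F' v) v
  hasDerivAt_deriv : ∀ v, 0 ≤ v → HasDerivAt F' (F'' v) v
  pos : ∀ v, 0 ≤ v → 0 < F v
  integrable : IntegrableOn F (Ioi 0)
  integrable_deriv : IntegrableOn F' (Ioi 0)
  integrable_deriv2 : IntegrableOn F'' (Ioi 0)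
  integrable_id_mul : IntegrableOn (fun v => v * F v) (Ioi 0)
  integral_eq_one : ∫ v in Ioi 0, F v = 1
  integrable_mul_log : IntegrableOn (fun v => F v * Real.log (F v)) (Ioi 0)
  integrable_fisher : IntegrableOn (fun v => F' v ^ 2 / F v) (Ioi 0)
  robin : F' 0 + F 0 ^ 2 = 0

/-- The flux `∂_v f + f(0) f`, whose `v`-derivative is the right-hand side of the BDY PDE. -/
def flux (F F' : ℝ → ℝ) (v : ℝ) : ℝ := F' v + F 0 * F v

/-- The integrand of the entropy dissipation. -/
noncomputable def dissipationDensity (F F' : ℝ → ℝ) (v : ℝ) : ℝ := flux F F' v ^ 2 / F v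

/-- The entropy dissipation `D[F]`. -/
noncomputable def dissipation (F F' : ℝ → ℝ) : ℝ := ∫ v in Ioi 0, dissipationDensity F F' v

/-- The rate at which `entropyDensity μ F` changes when `F` evolves by the BDY PDE. -/
noncomputable def entropyRate (μ : ℝ) (F F' F'' : ℝ → ℝ) (v : ℝ) : ℝ :=
  (F'' v + F 0 * F' v) * (Real.log (F v / gibbs μ v) + 1)

/-- An antiderivative in `v` of the flux. Unlike the flux itself, it depends on `F` only through
the values of `F`, hence it is continuous in time along a solution. -/
noncomputable def fluxPotential (F : ℝ → ℝ) (v : ℝ) : ℝ := F v + F 0 * ∫ w in (0 : ℝ)..v, F w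

/-- A constant `C` such that the cut-off entropy balance of a profile with boundary value `a` and
relative entropy `h` holds up to `C / R`. -/
noncomputable def cutoffError (μ a h : ℝ) : ℝ :=
  2 * |a * Real.log (a / gibbs μ 0)| + (2 + 2 * a) * (h + 2) + 4 * |1 / μ - a|
    + 4 * a * μ * |1 / μ - a| * (h + Real.log 2)

namespace IsProfile

variable {μ : ℝ} {F F' F'' : ℝ → ℝ}

lemma continuousOn (hF : IsProfile F F' F'') : ContinuousOn F (Ici 0) := fun v hv =>
  (hF.hasDerivAt v hv).continuousAt.continuousWithinAt

lemma continuousOn_deriv (hF : IsProfile F F' F'') : ContinuousOn F' (Ici 0) := fun v hv =>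
  (hF.hasDerivAt_deriv v hv).continuousAt.continuousWithinAt

lemma flux_zero (hF : IsProfile F F' F'') : flux F F' 0 = 0 := by
  rw [flux, ← sq, hF.robin]

lemma hasDerivAt_flux (hF : IsProfile F F' F'') {v : ℝ} (hv : 0 ≤ v) :
    HasDerivAt (flux F F') (F'' v + F 0 * F' v) v :=
  (hF.hasDerivAt_deriv v hv).add ((hF.hasDerivAt v hv).const_mul _)

lemma continuousOn_flux (hF : IsProfile F F' F'') : ContinuousOn (flux F F') (Ici 0) := fun _ hv =>
  (hF.hasDerivAt_flux hv).continuousAt.continuousWithinAt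

lemma hasDerivAt_log_div_gibbs (hF : IsProfile F F' F'') (hμ : 0 < μ) {v : ℝ} (hv : 0 ≤ v) :
    HasDerivAt (fun v => Real.log (F v / gibbs μ v)) (F' v / F v + 1 / μ) v := by
  have hlog : HasDerivAt (fun v => Real.log (F v)) (F' v / F v) v :=
    (hF.hasDerivAt v hv).log (hF.pos v hv).ne'
  refine ((hlog.add_const (Real.log μ)).add ((hasDerivAt_id v).div_const μ)).congr_of_eventuallyEq
    ?_
  filter_upwards [(hF.hasDerivAt v hv).continuousAt.eventually (lt_mem_nhds (hF.pos v hv))]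
    with w hw using log_div_gibbs hμ hw w

lemma continuousOn_log_div_gibbs (hF : IsProfile F F' F'') (hμ : 0 < μ) :
    ContinuousOn (fun v => Real.log (F v / gibbs μ v)) (Ici 0) := fun _ hv =>
  (hF.hasDerivAt_log_div_gibbs hμ hv).continuousAt.continuousWithinAt

lemma continuousOn_entropyDensity (hF : IsProfile F F' F'') (hμ : 0 < μ) :
    ContinuousOn (entropyDensity μ F) (Ici 0) :=
  hF.continuousOn.mul (hF.continuousOn_log_div_gibbs hμ)

lemma continuousOn_dissipationDensity (hF : IsProfile F F' F'') :
    ContinuousOn (dissipationDensity F F') (Ici 0) :=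
  (hF.continuousOn_flux.pow 2).div hF.continuousOn fun v hv => (hF.pos v hv).ne'

lemma integrableOn_entropyDensity (hF : IsProfile F F' F'') (hμ : 0 < μ) :
    IntegrableOn (entropyDensity μ F) (Ioi 0) := by
  refine ((hF.integrable_mul_log.add (hF.integrable.const_mul (Real.log μ))).add
    (hF.integrable_id_mul.div_const μ)).congr_fun (fun v hv => ?_) measurableSet_Ioi
  simp only [Pi.add_apply, entropyDensity, log_div_gibbs hμ (hF.pos v (le_of_lt hv))]
  ring

lemma integrableOn_dissipationDensity (hF : IsProfile F F' F'') :
    IntegrableOn (dissipationDensity F F') (Ioi 0) := by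
  refine ((hF.integrable_fisher.add (hF.integrable_deriv.const_mul (2 * F 0))).add
    (hF.integrable.const_mul (F 0 ^ 2))).congr_fun (fun v hv => ?_) measurableSet_Ioi
  have := (hF.pos v (le_of_lt hv)).ne'
  simp only [Pi.add_apply, dissipationDensity, flux]
  field_simp
  ring

lemma dissipationDensity_nonneg (hF : IsProfile F F' F'') {v : ℝ} (hv : 0 ≤ v) :
    0 ≤ dissipationDensity F F' v :=
  div_nonneg (sq_nonneg _) (hF.pos v hv).le

lemma dissipation_nonneg (hF : IsProfile F F' F'') : 0 ≤ dissipation F F' :=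
  setIntegral_nonneg measurableSet_Ioi fun _ hv => hF.dissipationDensity_nonneg (le_of_lt hv)

lemma relEntropy_nonneg (hF : IsProfile F F' F'') (hμ : 0 < μ) : 0 ≤ relEntropy μ F := by
  have hle : ∫ v in Ioi 0, (F v - gibbs μ v) ≤ relEntropy μ F :=
    setIntegral_mono_on (hF.integrable.sub (integrableOn_gibbs hμ))
      (hF.integrableOn_entropyDensity hμ) measurableSet_Ioi fun v hv =>
        sub_le_mul_log_div (hF.pos v (le_of_lt hv)) (gibbs_pos hμ v)
  rwa [integral_sub hF.integrable (integrableOn_gibbs hμ), hF.integral_eq_one, integral_gibbs hμ,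
    sub_self] at hle

lemma integral_abs_entropyDensity_le (hF : IsProfile F F' F'') (hμ : 0 < μ) :
    ∫ v in Ioi 0, |entropyDensity μ F v| ≤ relEntropy μ F + 2 := by
  have hint := hF.integrableOn_entropyDensity hμ
  have hgibbs := (integrableOn_gibbs hμ).const_mul 2
  calc ∫ v in Ioi 0, |entropyDensity μ F v|
      ≤ ∫ v in Ioi 0, (entropyDensity μ F v + 2 * gibbs μ v) :=
        setIntegral_mono_on hint.abs (hint.add hgibbs) measurableSet_Ioi fun v hv =>
          abs_mul_log_div_le (hF.pos v (le_of_lt hv)) (gibbs_pos hμ v)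
    _ = relEntropy μ F + 2 := by
        rw [integral_add hint hgibbs, integral_const_mul, integral_gibbs hμ, mul_one, relEntropy]

lemma relEntropy_two_mul (hF : IsProfile F F' F'') (hμ : 0 < μ) :
    relEntropy (2 * μ) F =
      relEntropy μ F + Real.log 2 - (∫ v in Ioi 0, v * F v) / (2 * μ) := by
  have hpoint : ∀ v ∈ Ioi (0 : ℝ), entropyDensity (2 * μ) F v =
      entropyDensity μ F v + Real.log 2 * F v - v * F v / (2 * μ) := fun v hv => by
    have hv' := hF.pos v (le_of_lt hv)
    rw [entropyDensity, entropyDensity, log_div_gibbs (by positivity) hv', log_div_gibbs hμ hv',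
      Real.log_mul two_ne_zero hμ.ne']
    field_simp
    ring
  have hint := hF.integrableOn_entropyDensity hμ
  have hmass := hF.integrable.const_mul (Real.log 2)
  have hadd : IntegrableOn (fun v => entropyDensity μ F v + Real.log 2 * F v) (Ioi 0) :=
    hint.add hmass
  rw [relEntropy, setIntegral_congr_fun measurableSet_Ioi hpoint,
    integral_sub hadd (hF.integrable_id_mul.div_const _), integral_add hint hmass,
    integral_const_mul, integral_div, hF.integral_eq_one, mul_one, relEntropy]

-- This is nonnegativity of the relative entropy with respect to the Gibbs density of mean `2 * μ`.
lemma integral_id_mul_le (hF : IsProfile F F' F'') (hμ : 0 < μ) :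
    ∫ v in Ioi 0, v * F v ≤ 2 * μ * (relEntropy μ F + Real.log 2) := by
  have hnonneg := hF.relEntropy_nonneg (μ := 2 * μ) (by positivity)
  rw [hF.relEntropy_two_mul hμ, sub_nonneg, div_le_iff₀ (by positivity)] at hnonneg
  linarith

lemma abs_one_sub_integral_cutoff_le (hF : IsProfile F F' F'') {R : ℝ} (hR : 0 < R) :
    |1 - ∫ v in (0 : ℝ)..R, cutoff R v * F v| ≤ 2 / R * ∫ v in Ioi 0, v * F v := by
  have hint : IntegrableOn ((Ioc 0 R).indicator fun v => cutoff R v * F v) (Ioi 0) :=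
    hF.integrable.abs.mono' (aestronglyMeasurable_indicator_cutoff_mul hF.integrable R)
      (.of_forall (abs_indicator_cutoff_mul_le R F))
  rw [integral_cutoff_mul_eq_setIntegral_indicator hR.le, ← hF.integral_eq_one,
    ← integral_sub hF.integrable hint, ← integral_const_mul, ← Real.norm_eq_abs]
  refine norm_integral_le_of_norm_le (hF.integrable_id_mul.const_mul _) ?_
  filter_upwards [ae_restrict_mem measurableSet_Ioi] with v (hv : 0 < v)
  have hpos := hF.pos v hv.le
  have hle := (le_abs_self _).trans (abs_indicator_cutoff_mul_le R F v)
  rw [abs_of_pos hpos] at hle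
  rw [Real.norm_eq_abs, abs_of_nonneg (sub_nonneg.2 hle), ← mul_assoc]
  by_cases hvR : v ≤ R
  · rw [indicator_of_mem (s := Ioc 0 R) ⟨hv, hvR⟩]
    calc F v - cutoff R v * F v = (1 - cutoff R v) * F v := by ring
      _ ≤ 2 / R * v * F v := by gcongr; exact one_sub_cutoff_le R v
  · have hRv : 1 ≤ 2 / R * v := by
      rw [div_mul_eq_mul_div, one_le_div hR]; linarith
    rw [indicator_of_notMem fun h => hvR h.2, sub_zero]
    exact le_mul_of_one_le_left hpos.le hRv

end IsProfile

end Profile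

section Balance

lemma hasDerivAt_one_sub_div (R v : ℝ) : HasDerivAt (fun v => 1 - v / R) (-(1 / R)) v := by
  simpa using ((hasDerivAt_id v).div_const R).const_sub 1

lemma hasDerivAt_cutoff (R v : ℝ) : HasDerivAt (cutoff R) (-(2 / R) * (1 - v / R)) v := by
  refine ((hasDerivAt_one_sub_div R v).pow 2).congr_deriv ?_
  push_cast
  ring

lemma intervalIntegrable_cutoff_mul {G : ℝ → ℝ} {a b : ℝ}
    (hG : IntervalIntegrable G volume a b) (R : ℝ) :
    IntervalIntegrable (fun v => cutoff R v * G v) volume a b :=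
  hG.continuousOn_mul (continuous_cutoff R).continuousOn

namespace IsProfile

variable {μ : ℝ} {F F' F'' : ℝ → ℝ}

lemma hasDerivAt_entropyDensity (hF : IsProfile F F' F'') (hμ : 0 < μ) {v : ℝ} (hv : 0 ≤ v) :
    HasDerivAt (entropyDensity μ F) (F' v * (Real.log (F v / gibbs μ v) + 1) + F v / μ) v := by
  refine ((hF.hasDerivAt v hv).mul (hF.hasDerivAt_log_div_gibbs hμ hv)).congr_deriv ?_
  have := (hF.pos v hv).ne'
  field_simp
  ring

lemma hasDerivAt_flux_mul_log (hF : IsProfile F F' F'') (hμ : 0 < μ) {v : ℝ} (hv : 0 ≤ v) :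
    HasDerivAt (fun v => flux F F' v * (Real.log (F v / gibbs μ v) + 1))
      (entropyRate μ F F' F'' v + dissipationDensity F F' v + (1 / μ - F 0) * flux F F' v) v := by
  refine ((hF.hasDerivAt_flux hv).mul
    ((hF.hasDerivAt_log_div_gibbs hμ hv).add_const 1)).congr_deriv ?_
  have := (hF.pos v hv).ne'
  simp only [entropyRate, dissipationDensity, flux]
  field_simp
  ring

-- This is a primitive of the cut-off entropy balance; it is found by integrating
-- `cutoff R v * entropyRate μ F F' F'' v` by parts twice.
lemma hasDerivAt_cutoff_balance (hF : IsProfile F F' F'') (hμ : 0 < μ) (R : ℝ) {v : ℝ}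
    (hv : 0 ≤ v) :
    HasDerivAt
      (fun v => cutoff R v * (flux F F' v * (Real.log (F v / gibbs μ v) + 1))
        + 2 / R * ((1 - v / R) * entropyDensity μ F v) - (1 / μ - F 0) * (cutoff R v * F v))
      (cutoff R v * entropyRate μ F F' F'' v + cutoff R v * dissipationDensity F F' v
        - 2 / R ^ 2 * entropyDensity μ F v - 2 * F 0 / R * ((1 - v / R) * entropyDensity μ F v)
        + 4 * (1 / μ - F 0) / R * ((1 - v / R) * F v)
        + (1 / μ - F 0) * F 0 * (cutoff R v * F v)) v := by
  have hcut := hasDerivAt_cutoff R v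
  refine (((hcut.mul (hF.hasDerivAt_flux_mul_log hμ hv)).add
    (((hasDerivAt_one_sub_div R v).mul (hF.hasDerivAt_entropyDensity hμ hv)).const_mul _)).sub
    ((hcut.mul (hF.hasDerivAt v hv)).const_mul _)).congr_deriv ?_
  simp only [flux, entropyDensity]
  ring

lemma intervalIntegrable_entropyRate (hF : IsProfile F F' F'') (hμ : 0 < μ) {R : ℝ}
    (hR : 0 ≤ R) : IntervalIntegrable (entropyRate μ F F' F'') volume 0 R := by
  rw [intervalIntegrable_iff_integrableOn_Icc_of_le hR]
  refine IntegrableOn.mul_continuousOn ?_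
    (((hF.continuousOn_log_div_gibbs hμ).mono Icc_subset_Ici_self).add continuousOn_const)
    isCompact_Icc
  rw [integrableOn_Icc_iff_integrableOn_Ioc]
  exact (hF.integrable_deriv2.add (hF.integrable_deriv.const_mul _)).mono_set Ioc_subset_Ioi_self

lemma integral_cutoff_balance (hF : IsProfile F F' F'') (hμ : 0 < μ) {R : ℝ} (hR : 0 < R) :
    (∫ v in (0 : ℝ)..R, cutoff R v * entropyRate μ F F' F'' v)
        + ∫ v in (0 : ℝ)..R, cutoff R v * dissipationDensity F F' v =
      -(2 / R * entropyDensity μ F 0) + 2 / R ^ 2 * (∫ v in (0 : ℝ)..R, entropyDensity μ F v)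
        + 2 * F 0 / R * (∫ v in (0 : ℝ)..R, (1 - v / R) * entropyDensity μ F v)
        - 4 * (1 / μ - F 0) / R * (∫ v in (0 : ℝ)..R, (1 - v / R) * F v)
        + (1 / μ - F 0) * F 0 * (1 - ∫ v in (0 : ℝ)..R, cutoff R v * F v) := by
  have hsub : uIcc 0 R ⊆ Ici 0 := uIcc_of_le hR.le ▸ Icc_subset_Ici_self
  have hint {G : ℝ → ℝ} (hG : ContinuousOn G (Ici 0)) : IntervalIntegrable G volume 0 R :=
    (hG.mono hsub).intervalIntegrable
  have hlin : ContinuousOn (fun v : ℝ => 1 - v / R) (uIcc 0 R) := by fun_prop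
  have hΨ := hint (hF.continuousOn_entropyDensity hμ)
  have hrate := intervalIntegrable_cutoff_mul (hF.intervalIntegrable_entropyRate hμ hR.le) R
  have hdiss := intervalIntegrable_cutoff_mul (hint hF.continuousOn_dissipationDensity) R
  have hΨ_sq := hΨ.const_mul (2 / R ^ 2)
  have hΨ_lin := (hΨ.continuousOn_mul hlin).const_mul (2 * F 0 / R)
  have hF_lin := ((hint hF.continuousOn).continuousOn_mul hlin).const_mul (4 * (1 / μ - F 0) / R)
  have hF_cut := (intervalIntegrable_cutoff_mul (hint hF.continuousOn) R).const_mul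
    ((1 / μ - F 0) * F 0)
  have hFTC := intervalIntegral.integral_eq_sub_of_hasDerivAt
    (fun v hv => hF.hasDerivAt_cutoff_balance hμ R (hsub hv))
    (((((hrate.add hdiss).sub hΨ_sq).sub hΨ_lin).add hF_lin).add hF_cut)
  rw [intervalIntegral.integral_add ((((hrate.add hdiss).sub hΨ_sq).sub hΨ_lin).add hF_lin) hF_cut,
    intervalIntegral.integral_add (((hrate.add hdiss).sub hΨ_sq).sub hΨ_lin) hF_lin,
    intervalIntegral.integral_sub ((hrate.add hdiss).sub hΨ_sq) hΨ_lin,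
    intervalIntegral.integral_sub (hrate.add hdiss) hΨ_sq,
    intervalIntegral.integral_add hrate hdiss] at hFTC
  simp only [intervalIntegral.integral_const_mul, hF.flux_zero, cutoff, div_self hR.ne', zero_div,
    sub_zero, sub_self] at hFTC ⊢
  linarith

lemma integral_abs (hF : IsProfile F F' F'') : ∫ v in Ioi 0, |F v| = 1 := by
  rw [← hF.integral_eq_one]
  exact setIntegral_congr_fun measurableSet_Ioi fun v hv => abs_of_pos (hF.pos v (le_of_lt hv))

lemma abs_integral_cutoff_balance_le (hF : IsProfile F F' F'') (hμ : 0 < μ) {R : ℝ}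
    (hR : 1 ≤ R) :
    |(∫ v in (0 : ℝ)..R, cutoff R v * entropyRate μ F F' F'' v)
        + ∫ v in (0 : ℝ)..R, cutoff R v * dissipationDensity F F' v|
      ≤ cutoffError μ (F 0) (relEntropy μ F) / R := by
  have hR0 : 0 < R := zero_lt_one.trans_le hR
  have ha : 0 < F 0 := hF.pos 0 le_rfl
  have hlin : ∀ v ∈ Ioc 0 R, |1 - v / R| ≤ 1 := fun v hv => abs_one_sub_div_le_one hv.1.le hv.2
  have hΨ := hF.integrableOn_entropyDensity hμ
  have hΨ_le := hF.integral_abs_entropyDensity_le hμ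
  have hΨ_full : |∫ v in (0 : ℝ)..R, entropyDensity μ F v| ≤ relEntropy μ F + 2 := by
    simpa using (abs_intervalIntegral_mul_le (g := fun _ => 1) hR0.le (by simp) hΨ).trans hΨ_le
  have hΨ_lin := (abs_intervalIntegral_mul_le hR0.le hlin hΨ).trans hΨ_le
  have hF_lin : |∫ v in (0 : ℝ)..R, (1 - v / R) * F v| ≤ 1 :=
    (abs_intervalIntegral_mul_le hR0.le hlin hF.integrable).trans_eq hF.integral_abs
  have hmean : |1 - ∫ v in (0 : ℝ)..R, cutoff R v * F v|
      ≤ 2 / R * (2 * μ * (relEntropy μ F + Real.log 2)) :=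
    (hF.abs_one_sub_integral_cutoff_le hR0).trans (by gcongr; exact hF.integral_id_mul_le hμ)
  have hRsq : 2 / R ^ 2 ≤ 2 / R := by gcongr; nlinarith
  rw [hF.integral_cutoff_balance hμ hR0]
  calc _ ≤ |2 / R * entropyDensity μ F 0| + |2 / R ^ 2 * ∫ v in (0 : ℝ)..R, entropyDensity μ F v|
        + |2 * F 0 / R * ∫ v in (0 : ℝ)..R, (1 - v / R) * entropyDensity μ F v|
        + |4 * (1 / μ - F 0) / R * ∫ v in (0 : ℝ)..R, (1 - v / R) * F v|
        + |(1 / μ - F 0) * F 0 * (1 - ∫ v in (0 : ℝ)..R, cutoff R v * F v)| := by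
        refine (abs_add_le _ _).trans (add_le_add_left ((abs_sub _ _).trans (add_le_add_left
          ((abs_add_le _ _).trans (add_le_add_left ((abs_add_le _ _).trans_eq ?_) _)) _)) _)
        rw [abs_neg]
    _ ≤ 2 / R * |entropyDensity μ F 0| + 2 / R * (relEntropy μ F + 2)
        + 2 * F 0 / R * (relEntropy μ F + 2) + 4 * |1 / μ - F 0| / R * 1
        + |1 / μ - F 0| * F 0 * (2 / R * (2 * μ * (relEntropy μ F + Real.log 2))) := by
        simp only [abs_mul, abs_div, abs_of_pos ha, abs_of_pos hR0, abs_pow, abs_two,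
          abs_of_pos (zero_lt_four' ℝ)]
        gcongr
    _ = cutoffError μ (F 0) (relEntropy μ F) / R := by
        rw [cutoffError, entropyDensity]
        ring

lemma tendsto_integral_cutoff_dissipationDensity (hF : IsProfile F F' F'') :
    Tendsto (fun R => ∫ v in (0 : ℝ)..R, cutoff R v * dissipationDensity F F' v) atTop
      (𝓝 (dissipation F F')) :=
  tendsto_integral_cutoff_mul hF.integrableOn_dissipationDensity

lemma integral_entropyRate_eq_neg_dissipation (hF : IsProfile F F' F'') (hμ : 0 < μ)
    (hint : IntegrableOn (entropyRate μ F F' F'') (Ioi 0)) :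
    ∫ v in Ioi 0, entropyRate μ F F' F'' v = -dissipation F F' := by
  have hlim := (tendsto_integral_cutoff_mul hint).add
    hF.tendsto_integral_cutoff_dissipationDensity
  have hzero := squeeze_zero_norm' (f := fun R =>
      (∫ v in (0 : ℝ)..R, cutoff R v * entropyRate μ F F' F'' v)
        + ∫ v in (0 : ℝ)..R, cutoff R v * dissipationDensity F F' v)
    (a := fun R => cutoffError μ (F 0) (relEntropy μ F) / R)
    ((eventually_ge_atTop 1).mono fun R hR => hF.abs_integral_cutoff_balance_le hμ hR)
    (tendsto_id.const_div_atTop _)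
  exact eq_neg_of_add_eq_zero_left (tendsto_nhds_unique hlim hzero)

lemma integral_entropyRate_eq (hF : IsProfile F F' F'') (hμ : 0 < μ) :
    ∫ v in Ioi 0, entropyRate μ F F' F'' v = 0 ∨
      ∫ v in Ioi 0, entropyRate μ F F' F'' v = -dissipation F F' := by
  by_cases hint : IntegrableOn (entropyRate μ F F' F'') (Ioi 0)
  · exact .inr (hF.integral_entropyRate_eq_neg_dissipation hμ hint)
  · exact .inl (integral_undef hint)

end IsProfile

end Balance

section Potential

namespace IsProfile

variable {F F' F'' : ℝ → ℝ}

lemma intervalIntegrable {v : ℝ} (hF : IsProfile F F' F'') (hv : 0 ≤ v) :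
    IntervalIntegrable F volume 0 v :=
  (hF.continuousOn.mono (uIcc_of_le hv ▸ Icc_subset_Ici_self)).intervalIntegrable

lemma hasDerivAt_fluxPotential (hF : IsProfile F F' F'') {v : ℝ} (hv : 0 < v) :
    HasDerivAt (fluxPotential F) (flux F F' v) v := by
  have hmeas := (hF.continuousOn.mono Ioi_subset_Ici_self).stronglyMeasurableAtFilter
    (μ := volume) isOpen_Ioi v hv
  exact (hF.hasDerivAt v hv.le).add ((intervalIntegral.integral_hasDerivAt_right
    (hF.intervalIntegrable hv.le) hmeas (hF.hasDerivAt v hv.le).continuousAt).const_mul _)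

lemma hasDerivAt_deriv_fluxPotential (hF : IsProfile F F' F'') {v : ℝ} (hv : 0 < v) :
    HasDerivAt (deriv (fluxPotential F)) (F'' v + F 0 * F' v) v :=
  (hF.hasDerivAt_flux hv.le).congr_of_eventuallyEq <|
    (eventually_gt_nhds hv).mono fun _ hw => (hF.hasDerivAt_fluxPotential hw).deriv

lemma integral_flux (hF : IsProfile F F' F'') {q : ℝ} (hq : 0 ≤ q) :
    ∫ v in (0 : ℝ)..q, flux F F' v = fluxPotential F q - fluxPotential F 0 := by
  have hint : IntervalIntegrable F' volume 0 q :=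
    (hF.continuousOn_deriv.mono (uIcc_of_le hq ▸ Icc_subset_Ici_self)).intervalIntegrable
  have hFTC : ∫ v in (0 : ℝ)..q, F' v = F q - F 0 :=
    intervalIntegral.integral_eq_sub_of_hasDerivAt
      (fun v hv => hF.hasDerivAt v (uIcc_of_le hq ▸ hv).1) hint
  simp only [flux, fluxPotential]
  rw [intervalIntegral.integral_add hint ((hF.intervalIntegrable hq).const_mul _), hFTC,
    intervalIntegral.integral_const_mul, intervalIntegral.integral_same]
  ring

lemma sq_fluxPotential_sub_le (hF : IsProfile F F' F'') {q : ℝ} (hq : 0 ≤ q) :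
    (fluxPotential F q - fluxPotential F 0) ^ 2
      ≤ ∫ v in (0 : ℝ)..q, dissipationDensity F F' v := by
  have hsub : Ioc 0 q ⊆ Ioi (0 : ℝ) := Ioc_subset_Ioi_self
  have hmass : ∫ v in Ioc 0 q, F v ≤ 1 := by
    rw [← hF.integral_eq_one]
    exact setIntegral_mono_set hF.integrable
      ((ae_restrict_mem measurableSet_Ioi).mono fun v hv => (hF.pos v (le_of_lt hv)).le)
      hsub.eventuallyLE
  rw [← hF.integral_flux hq, intervalIntegral.integral_of_le hq,
    intervalIntegral.integral_of_le hq]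
  exact sq_integral_le_integral_sq_div
    ((hF.integrable_deriv.add (hF.integrable.const_mul _)).mono_set hsub)
    (hF.integrable.mono_set hsub)
    ((ae_restrict_mem measurableSet_Ioc).mono fun v hv => hF.pos v hv.1.le) hmass
    (hF.integrableOn_dissipationDensity.mono_set hsub)

lemma sq_fluxPotential_sub_le_dissipation (hF : IsProfile F F' F'') {q : ℝ} (hq : 0 ≤ q) :
    (fluxPotential F q - fluxPotential F 0) ^ 2 ≤ dissipation F F' := by
  refine (hF.sq_fluxPotential_sub_le hq).trans ?_
  rw [intervalIntegral.integral_of_le hq]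
  exact setIntegral_mono_set hF.integrableOn_dissipationDensity
    ((ae_restrict_mem measurableSet_Ioi).mono fun v hv =>
      hF.dissipationDensity_nonneg (le_of_lt hv)) Ioc_subset_Ioi_self.eventuallyLE

lemma cutoff_mul_sq_fluxPotential_sub_le (hF : IsProfile F F' F'') {q R : ℝ} (hq : 0 ≤ q)
    (hqR : q ≤ R) :
    cutoff R q * (fluxPotential F q - fluxPotential F 0) ^ 2
      ≤ ∫ v in (0 : ℝ)..R, cutoff R v * dissipationDensity F F' v := by
  have hint {r : ℝ} (hr : 0 ≤ r) : IntervalIntegrable (dissipationDensity F F') volume 0 r :=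
    (hF.continuousOn_dissipationDensity.mono
      (uIcc_of_le hr ▸ Icc_subset_Ici_self)).intervalIntegrable
  have hmono : ∀ v ∈ Icc 0 q, cutoff R q ≤ cutoff R v := fun v hv =>
    pow_le_pow_left₀ (sub_nonneg.2 (div_le_one_of_le₀ hqR (hq.trans hqR)))
      (sub_le_sub_left (div_le_div_of_nonneg_right hv.2 (hq.trans hqR)) 1) 2
  calc cutoff R q * (fluxPotential F q - fluxPotential F 0) ^ 2
      ≤ ∫ v in (0 : ℝ)..q, cutoff R q * dissipationDensity F F' v := by
        rw [intervalIntegral.integral_const_mul]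
        exact mul_le_mul_of_nonneg_left (hF.sq_fluxPotential_sub_le hq) (cutoff_nonneg R q)
    _ ≤ ∫ v in (0 : ℝ)..q, cutoff R v * dissipationDensity F F' v :=
        intervalIntegral.integral_mono_on hq ((hint hq).const_mul _)
          (intervalIntegrable_cutoff_mul (hint hq) R) fun v hv =>
            mul_le_mul_of_nonneg_right (hmono v hv) (hF.dissipationDensity_nonneg hv.1)
    _ ≤ ∫ v in (0 : ℝ)..R, cutoff R v * dissipationDensity F F' v :=
        intervalIntegral.integral_mono_interval le_rfl hq hqR
          ((ae_restrict_mem measurableSet_Ioc).mono fun v hv =>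
            mul_nonneg (cutoff_nonneg R v) (hF.dissipationDensity_nonneg hv.1.le))
          (intervalIntegrable_cutoff_mul (hint (hq.trans hqR)) R)

lemma exists_fluxPotential_ne (hF : IsProfile F F' F'') (hD : dissipation F F' ≠ 0) :
    ∃ q, 0 ≤ q ∧ fluxPotential F q ≠ fluxPotential F 0 := by
  contrapose! hD
  have hflux : ∀ v ∈ Ioi (0 : ℝ), dissipationDensity F F' v = 0 := fun v hv => by
    have hconst : HasDerivAt (fluxPotential F) 0 v :=
      (hasDerivAt_const v (fluxPotential F 0)).congr_of_eventuallyEq <|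
        (eventually_gt_nhds hv).mono fun w hw => hD w hw.le
    rw [dissipationDensity, (hF.hasDerivAt_fluxPotential hv).unique hconst]
    simp
  exact setIntegral_eq_zero_of_forall_eq_zero hflux

end IsProfile

end Potential

section Solution

/-- A classical solution of the BDY PDE on `[0, ∞) × [0, ∞)` all of whose time slices are
profiles; `ft`, `fv` and `fvv` are the derivatives `∂_t f`, `∂_v f` and `∂_vv f`. -/
structure IsBDYSolution (f ft fv fvv : ℝ → ℝ → ℝ) : Prop where
  profile : ∀ t, 0 ≤ t → IsProfile (f · t) (fv · t) (fvv · t)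
  continuousOn : ContinuousOn (fun p : ℝ × ℝ => f p.1 p.2) (Ici 0 ×ˢ Ici 0)
  hasDerivAt_time : ∀ v t, 0 ≤ v → 0 ≤ t → HasDerivAt (fun s => f v s) (ft v t) t
  pde : ∀ v t, 0 < v → 0 ≤ t → ft v t = fvv v t + f 0 t * fv v t

namespace IsBDYSolution

variable {f ft fv fvv : ℝ → ℝ → ℝ} {μ : ℝ}

lemma continuous_clamp (hf : IsBDYSolution f ft fv fvv) :
    Continuous fun p : ℝ × ℝ => f (max p.1 0) (max p.2 0) :=
  hf.continuousOn.comp_continuous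
    (f := fun p : ℝ × ℝ => (max p.1 0, max p.2 0)) (by fun_prop)
    fun p => ⟨le_max_right p.1 0, le_max_right p.2 0⟩

lemma continuous_time (hf : IsBDYSolution f ft fv fvv) {v : ℝ} (hv : 0 ≤ v) :
    Continuous fun s => f v (max s 0) := by
  have := hf.continuous_clamp.comp (Continuous.prodMk_right v)
  simpa only [Function.comp_def, max_eq_left hv] using this

lemma continuous_fluxPotential (hf : IsBDYSolution f ft fv fvv) {v : ℝ} (hv : 0 ≤ v) :
    Continuous fun s => fluxPotential (f · (max s 0)) v := by
  have hclamp : Continuous fun s => ∫ w in (0 : ℝ)..v, f (max w 0) (max s 0) :=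
    intervalIntegral.continuous_parametric_intervalIntegral_of_continuous'
      (f := fun s w => f (max w 0) (max s 0)) (hf.continuous_clamp.comp continuous_swap) 0 v
  have hmass : Continuous fun s => ∫ w in (0 : ℝ)..v, f w (max s 0) :=
    hclamp.congr fun s => intervalIntegral.integral_congr fun w hw => by
      simp only [max_eq_left (uIcc_of_le hv ▸ hw).1]
  exact (hf.continuous_time hv).add ((hf.continuous_time le_rfl).mul hmass)

lemma lowerSemicontinuous_lintegral_enorm_timeDeriv (hf : IsBDYSolution f ft fv fvv) :
    LowerSemicontinuous fun s => ∫⁻ v in Ioi 0, ‖ft v (max s 0)‖ₑ := by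
  have hprofile (s : ℝ) := hf.profile (max s 0) (le_max_right _ _)
  have heq (s : ℝ) : ∫⁻ v in Ioi 0, ‖ft v (max s 0)‖ₑ =
      ∫⁻ v in Ioi 0, ‖deriv (deriv (fluxPotential (f · (max s 0)))) v‖ₑ :=
    setLIntegral_congr_fun measurableSet_Ioi fun v hv => by
      simp only [((hprofile s).hasDerivAt_deriv_fluxPotential hv).deriv,
        hf.pde v _ hv (le_max_right s 0)]
  simp only [heq]
  exact lowerSemicontinuous_lintegral_enorm_deriv_deriv
    (fun s v hv => ((hprofile s).hasDerivAt_fluxPotential hv).differentiableAt)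
    (fun s v hv => ((hprofile s).hasDerivAt_deriv_fluxPotential hv).differentiableAt)
    fun v hv => hf.continuous_fluxPotential hv.le

lemma lintegral_enorm_timeDeriv_ne_top (hf : IsBDYSolution f ft fv fvv) {t : ℝ} (ht : 0 ≤ t) :
    ∫⁻ v in Ioi 0, ‖ft v t‖ₑ ≠ ∞ := by
  have hF := hf.profile t ht
  have hint : IntegrableOn (ft · t) (Ioi 0) :=
    (hF.integrable_deriv2.add (hF.integrable_deriv.const_mul (f 0 t))).congr_fun
      (fun v hv => (hf.pde v t hv ht).symm) measurableSet_Ioi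
  exact hint.2.ne

lemma exists_Icc_lintegral_enorm_timeDeriv_le (hf : IsBDYSolution f ft fv fvv) {a b : ℝ}
    (ha : 0 ≤ a) (hab : a < b) :
    ∃ c d, c < d ∧ Icc c d ⊆ Ioo a b ∧
      ∃ n : ℕ, ∀ s ∈ Icc c d, ∫⁻ v in Ioi 0, ‖ft v s‖ₑ ≤ n := by
  obtain ⟨c, d, hcd, hsub, n, hn⟩ := exists_Icc_subset_forall_le_of_lowerSemicontinuous
    hf.lowerSemicontinuous_lintegral_enorm_timeDeriv
    (fun s => hf.lintegral_enorm_timeDeriv_ne_top (le_max_right s 0)) hab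
  refine ⟨c, d, hcd, hsub, n, fun s hs => ?_⟩
  simpa only [max_eq_left (ha.trans (hsub hs).1.le)] using hn s hs

lemma integrableOn_timeDeriv (hf : IsBDYSolution f ft fv fvv) {a b : ℝ} (ha : 0 ≤ a) {C : ℝ≥0∞}
    (hC : C ≠ ∞) (hbound : ∀ s ∈ Icc a b, ∫⁻ v in Ioi 0, ‖ft v s‖ₑ ≤ C) (R : ℝ) :
    IntegrableOn (fun p : ℝ × ℝ => ft p.1 p.2) (Ioc 0 R ×ˢ Ioc a b) := by
  have hderiv : ∀ᵐ p : ℝ × ℝ ∂volume.restrict (Ioc 0 R ×ˢ Ioc a b),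
      deriv (fun s => f (max p.1 0) (max s 0)) p.2 = ft p.1 p.2 := by
    filter_upwards [ae_restrict_mem (measurableSet_Ioc.prod measurableSet_Ioc)] with p hp
    have hs : 0 < p.2 := ha.trans_lt hp.2.1
    refine ((hf.hasDerivAt_time p.1 p.2 hp.1.1.le hs.le).congr_of_eventuallyEq ?_).deriv
    filter_upwards [eventually_gt_nhds hs] with s hs
    rw [max_eq_left hp.1.1.le, max_eq_left hs.le]
  have hmeas : AEStronglyMeasurable (fun p : ℝ × ℝ => ft p.1 p.2)
      (volume.restrict (Ioc 0 R ×ˢ Ioc a b)) :=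
    (measurable_deriv_with_param (f := fun v s => f (max v 0) (max s 0))
      hf.continuous_clamp).aestronglyMeasurable.congr hderiv
  refine ⟨hmeas, ?_⟩
  rw [Measure.volume_eq_prod, ← Measure.prod_restrict] at hmeas ⊢
  calc ∫⁻ p, ‖ft p.1 p.2‖ₑ ∂(volume.restrict (Ioc 0 R)).prod (volume.restrict (Ioc a b))
      = ∫⁻ s in Ioc a b, ∫⁻ v in Ioc 0 R, ‖ft v s‖ₑ := lintegral_prod_symm _ hmeas.enorm
    _ ≤ ∫⁻ _ in Ioc a b, C := setLIntegral_mono' measurableSet_Ioc fun s hs =>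
        (lintegral_mono_set Ioc_subset_Ioi_self).trans (hbound s (Ioc_subset_Icc_self hs))
    _ < ∞ := by
        rw [setLIntegral_const, Real.volume_Ioc]
        exact ENNReal.mul_lt_top hC.lt_top ENNReal.ofReal_lt_top

lemma hasDerivAt_entropyDensity (hf : IsBDYSolution f ft fv fvv) (hμ : 0 < μ) {v t : ℝ}
    (hv : 0 ≤ v) (ht : 0 ≤ t) :
    HasDerivAt (fun s => entropyDensity μ (f · s) v)
      (ft v t * (Real.log (f v t / gibbs μ v) + 1)) t := by
  have hfd := hf.hasDerivAt_time v t hv ht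
  have hpos := (hf.profile t ht).pos v hv
  have hgibbs := gibbs_pos hμ v
  refine (hfd.mul ((hfd.div_const (gibbs μ v)).log (div_pos hpos hgibbs).ne')).congr_deriv ?_
  field_simp

lemma entropyRate_eq (hf : IsBDYSolution f ft fv fvv) {v t : ℝ} (hv : 0 < v) (ht : 0 ≤ t) :
    entropyRate μ (f · t) (fv · t) (fvv · t) v =
      ft v t * (Real.log (f v t / gibbs μ v) + 1) := by
  rw [entropyRate, hf.pde v t hv ht]

lemma continuousOn_log_div_gibbs (hf : IsBDYSolution f ft fv fvv) (hμ : 0 < μ) :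
    ContinuousOn (fun p : ℝ × ℝ => Real.log (f p.1 p.2 / gibbs μ p.1)) (Ici 0 ×ˢ Ici 0) :=
  (hf.continuousOn.div ((continuous_gibbs μ).comp continuous_fst).continuousOn
    fun p _ => (gibbs_pos hμ p.1).ne').log fun p hp =>
      (div_pos ((hf.profile p.2 hp.2).pos p.1 hp.1) (gibbs_pos hμ p.1)).ne'

lemma integrable_cutoff_mul_timeDeriv_mul_log (hf : IsBDYSolution f ft fv fvv) (hμ : 0 < μ)
    {a b : ℝ} (ha : 0 ≤ a) {C : ℝ≥0∞} (hC : C ≠ ∞)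
    (hbound : ∀ s ∈ Icc a b, ∫⁻ v in Ioi 0, ‖ft v s‖ₑ ≤ C) (R : ℝ) :
    Integrable
      (fun p : ℝ × ℝ => cutoff R p.1 * (ft p.1 p.2 * (Real.log (f p.1 p.2 / gibbs μ p.1) + 1)))
      ((volume.restrict (Ioc 0 R)).prod (volume.restrict (Ioc a b))) := by
  have hweight : ContinuousOn
      (fun p : ℝ × ℝ => cutoff R p.1 * (Real.log (f p.1 p.2 / gibbs μ p.1) + 1))
      (Icc 0 R ×ˢ Icc a b) :=
    ((continuous_cutoff R).comp continuous_fst).continuousOn.mul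
      (((hf.continuousOn_log_div_gibbs hμ).mono
        (prod_mono Icc_subset_Ici_self fun s hs => ha.trans hs.1)).add continuousOn_const)
  have hint := (hf.integrableOn_timeDeriv ha hC hbound R).mul_continuousOn_of_subset hweight
    (measurableSet_Ioc.prod measurableSet_Ioc) (isCompact_Icc.prod isCompact_Icc)
    (prod_mono Ioc_subset_Icc_self Ioc_subset_Icc_self)
  rw [Measure.prod_restrict, ← Measure.volume_eq_prod]
  exact hint.congr (.of_forall fun p => by ring)

lemma intervalIntegrable_integral_cutoff_mul_timeDeriv_mul_log (hf : IsBDYSolution f ft fv fvv)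
    (hμ : 0 < μ) {a b : ℝ} (ha : 0 ≤ a) (hab : a ≤ b) {C : ℝ≥0∞} (hC : C ≠ ∞)
    (hbound : ∀ s ∈ Icc a b, ∫⁻ v in Ioi 0, ‖ft v s‖ₑ ≤ C) {R : ℝ} (hR : 0 ≤ R) :
    IntervalIntegrable
      (fun s => ∫ v in (0 : ℝ)..R, cutoff R v * (ft v s * (Real.log (f v s / gibbs μ v) + 1)))
      volume a b := by
  simp only [intervalIntegral.integral_of_le hR, intervalIntegrable_iff_integrableOn_Ioc_of_le hab]
  exact (hf.integrable_cutoff_mul_timeDeriv_mul_log hμ ha hC hbound R).integral_prod_right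

lemma integral_integral_cutoff_mul_timeDeriv_mul_log (hf : IsBDYSolution f ft fv fvv) (hμ : 0 < μ)
    {a b : ℝ} (ha : 0 ≤ a) (hab : a ≤ b) {C : ℝ≥0∞} (hC : C ≠ ∞)
    (hbound : ∀ s ∈ Icc a b, ∫⁻ v in Ioi 0, ‖ft v s‖ₑ ≤ C) {R : ℝ} (hR : 0 ≤ R) :
    ∫ s in a..b, ∫ v in (0 : ℝ)..R, cutoff R v * (ft v s * (Real.log (f v s / gibbs μ v) + 1)) =
      ∫ v in (0 : ℝ)..R,
        cutoff R v * (entropyDensity μ (f · b) v - entropyDensity μ (f · a) v) := by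
  simp only [intervalIntegral.integral_of_le hR, mul_sub]
  refine intervalIntegral_integral_eq_integral_sub
    (g := fun v s => cutoff R v * entropyDensity μ (f · s) v) hab ?_
    (hf.integrable_cutoff_mul_timeDeriv_mul_log hμ ha hC hbound R)
  filter_upwards [ae_restrict_mem measurableSet_Ioc] with v hv s hs
  exact (hf.hasDerivAt_entropyDensity hμ hv.1.le (ha.trans hs.1)).const_mul _

lemma integral_cutoff_mul_timeDeriv_mul_log_le (hf : IsBDYSolution f ft fv fvv) (hμ : 0 < μ)
    {t q c R : ℝ} (ht : 0 ≤ t) (hq : 0 ≤ q)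
    (hc : c ≤ (fluxPotential (f · t) q - fluxPotential (f · t) 0) ^ 2) (hqR : q ≤ R)
    (hR : 1 ≤ R) :
    ∫ v in (0 : ℝ)..R, cutoff R v * (ft v t * (Real.log (f v t / gibbs μ v) + 1))
      ≤ cutoffError μ (f 0 t) (relEntropy μ (f · t)) / R - cutoff R q * c := by
  have hF := hf.profile t ht
  have hrate : ∫ v in (0 : ℝ)..R, cutoff R v * (ft v t * (Real.log (f v t / gibbs μ v) + 1)) =
      ∫ v in (0 : ℝ)..R, cutoff R v * entropyRate μ (f · t) (fv · t) (fvv · t) v := by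
    simp only [intervalIntegral.integral_of_le (zero_le_one.trans hR)]
    exact setIntegral_congr_fun measurableSet_Ioc fun v hv => by
      simp only [hf.entropyRate_eq hv.1 ht]
  have hbalance := (le_abs_self _).trans (hF.abs_integral_cutoff_balance_le hμ hR)
  have hdiss := (mul_le_mul_of_nonneg_left hc (cutoff_nonneg R q)).trans
    (hF.cutoff_mul_sq_fluxPotential_sub_le hq hqR)
  linarith

lemma exists_cutoffError_le (hf : IsBDYSolution f ft fv fvv) (hμ : 0 < μ) {a b : ℝ}
    (ha : 0 ≤ a) (hH : ContinuousOn (fun s => relEntropy μ (f · s)) (Icc a b)) :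
    ∃ K, ∀ s ∈ Icc a b, cutoffError μ (f 0 s) (relEntropy μ (f · s)) ≤ K := by
  have hzero : ContinuousOn (fun s => f 0 s) (Icc a b) := fun s hs =>
    (hf.hasDerivAt_time 0 s le_rfl (ha.trans hs.1)).continuousAt.continuousWithinAt
  have hlog : ContinuousOn (fun s => f 0 s * Real.log (f 0 s / gibbs μ 0)) (Icc a b) :=
    hzero.mul <| (hzero.div_const _).log fun s hs =>
      (div_pos ((hf.profile s (ha.trans hs.1)).pos 0 le_rfl) (gibbs_pos hμ 0)).ne'
  have hcont : ContinuousOn (fun s => cutoffError μ (f 0 s) (relEntropy μ (f · s))) (Icc a b) := by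
    unfold cutoffError
    fun_prop
  obtain ⟨K, hK⟩ := isCompact_Icc.bddAbove_image hcont
  exact ⟨K, fun s hs => hK (mem_image_of_mem _ hs)⟩

lemma relEntropy_sub_le (hf : IsBDYSolution f ft fv fvv) (hμ : 0 < μ) {a b : ℝ} (ha : 0 ≤ a)
    (hab : a ≤ b) {C : ℝ≥0∞} (hC : C ≠ ∞)
    (hbound : ∀ s ∈ Icc a b, ∫⁻ v in Ioi 0, ‖ft v s‖ₑ ≤ C)
    (hH : ContinuousOn (fun s => relEntropy μ (f · s)) (Icc a b)) {q c : ℝ} (hq : 0 ≤ q)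
    (hc : ∀ s ∈ Icc a b, c ≤ (fluxPotential (f · s) q - fluxPotential (f · s) 0) ^ 2) :
    relEntropy μ (f · b) - relEntropy μ (f · a) ≤ -c * (b - a) := by
  obtain ⟨K, hK⟩ := hf.exists_cutoffError_le hμ ha hH
  have hint (t : ℝ) (ht : 0 ≤ t) := (hf.profile t ht).integrableOn_entropyDensity hμ
  have hlim := tendsto_integral_cutoff_mul ((hint b (ha.trans hab)).sub (hint a ha))
  simp only [Pi.sub_apply, integral_sub (hint b (ha.trans hab)) (hint a ha)] at hlim
  have hlim' : Tendsto (fun R => (b - a) * (K / R - cutoff R q * c)) atTop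
      (𝓝 ((b - a) * (0 - (1 - 0) ^ 2 * c))) :=
    ((tendsto_id.const_div_atTop K).sub (((tendsto_const_nhds.sub
      (tendsto_id.const_div_atTop q)).pow 2).mul_const c)).const_mul _
  refine (le_of_tendsto_of_tendsto hlim hlim' ?_).trans_eq (by ring)
  filter_upwards [eventually_ge_atTop 1, eventually_ge_atTop q] with R hR hqR
  have hR0 : 0 ≤ R := zero_le_one.trans hR
  rw [← hf.integral_integral_cutoff_mul_timeDeriv_mul_log hμ ha hab hC hbound hR0,
    ← smul_eq_mul (b - a), ← intervalIntegral.integral_const]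
  refine intervalIntegral.integral_mono_on hab
    (hf.intervalIntegrable_integral_cutoff_mul_timeDeriv_mul_log hμ ha hab hC hbound hR0)
    intervalIntegrable_const fun s hs => ?_
  refine (hf.integral_cutoff_mul_timeDeriv_mul_log_le hμ (ha.trans hs.1) hq (hc s hs)
    hqR hR).trans ?_
  gcongr
  exact hK s hs

lemma exists_le_sq_fluxPotential_sub (hf : IsBDYSolution f ft fv fvv) {t : ℝ} (ht : 0 ≤ t)
    (hD : dissipation (f · t) (fv · t) ≠ 0) :
    ∃ q, 0 ≤ q ∧ ∃ c, 0 < c ∧ ∃ b, t < b ∧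
      ∀ s ∈ Icc t b, c ≤ (fluxPotential (f · s) q - fluxPotential (f · s) 0) ^ 2 := by
  obtain ⟨q, hq, hne⟩ := (hf.profile t ht).exists_fluxPotential_ne hD
  set g : ℝ → ℝ := fun s =>
    (fluxPotential (f · (max s 0)) q - fluxPotential (f · (max s 0)) 0) ^ 2
  have hg {s : ℝ} (hs : 0 ≤ s) :
      g s = (fluxPotential (f · s) q - fluxPotential (f · s) 0) ^ 2 := by
    simp only [g, max_eq_left hs]
  have hpos : 0 < g t := hg ht ▸ sq_pos_of_ne_zero (sub_ne_zero.2 hne)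
  have hcont : Continuous g :=
    ((hf.continuous_fluxPotential hq).sub (hf.continuous_fluxPotential le_rfl)).pow 2
  obtain ⟨b, htb, hb⟩ := mem_nhdsGE_iff_exists_Icc_subset.1 <| mem_nhdsWithin_of_mem_nhds
    (hcont.continuousAt.eventually (lt_mem_nhds (half_lt_self hpos)))
  refine ⟨q, hq, g t / 2, half_pos hpos, b, htb, fun s hs => ?_⟩
  rw [← hg (ht.trans hs.1)]
  exact le_of_lt (hb hs)

lemma integral_timeDeriv_mul_log_eq (hf : IsBDYSolution f ft fv fvv) (hμ : 0 < μ) {t : ℝ}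
    (ht : 0 ≤ t) :
    ∫ v in Ioi 0, ft v t * (Real.log (f v t / gibbs μ v) + 1) = 0 ∨
      ∫ v in Ioi 0, ft v t * (Real.log (f v t / gibbs μ v) + 1) =
        -dissipation (f · t) (fv · t) := by
  rw [← setIntegral_congr_fun measurableSet_Ioi fun _ hv => hf.entropyRate_eq hv ht]
  exact (hf.profile t ht).integral_entropyRate_eq hμ

lemma exists_deriv_relEntropy_ne_zero (hf : IsBDYSolution f ft fv fvv) (hμ : 0 < μ) {a b : ℝ}
    (ha : 0 ≤ a) (hab : a < b) {H' : ℝ → ℝ}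
    (hH : ∀ s ∈ Icc a b, HasDerivAt (fun s => relEntropy μ (f · s)) (H' s) s) {q c : ℝ}
    (hq : 0 ≤ q) (hc : 0 < c)
    (hle : ∀ s ∈ Icc a b, c ≤ (fluxPotential (f · s) q - fluxPotential (f · s) 0) ^ 2) :
    ∃ s ∈ Icc a b, H' s ≠ 0 := by
  by_contra! hzero
  obtain ⟨t₁, t₂, ht, hsub, n, hn⟩ := hf.exists_Icc_lintegral_enorm_timeDeriv_le ha hab
  have hmem : Icc t₁ t₂ ⊆ Icc a b := hsub.trans Ioo_subset_Icc_self
  have hcont : ContinuousOn (fun s => relEntropy μ (f · s)) (Icc t₁ t₂) := fun s hs =>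
    (hH s (hmem hs)).continuousAt.continuousWithinAt
  have hconst : relEntropy μ (f · t₂) = relEntropy μ (f · t₁) :=
    constant_of_has_deriv_right_zero hcont (fun s hs => by
      have hs' := hmem (Ico_subset_Icc_self hs)
      exact hzero s hs' ▸ (hH s hs').hasDerivWithinAt) t₂ (right_mem_Icc.2 ht.le)
  have hdecr := hf.relEntropy_sub_le hμ (ha.trans (hmem (left_mem_Icc.2 ht.le)).1) ht.le
    (ENNReal.natCast_ne_top n) hn hcont hq fun s hs => hle s (hmem hs)
  nlinarith [mul_pos hc (sub_pos.2 ht)]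

end IsBDYSolution

end Solution

end BDY

theorem BDY_PDE_entropy_dissipation_general {μ : ℝ} (hμ : 0 < μ) {f ft fv fvv : ℝ → ℝ → ℝ}
    (hf : BDY.IsBDYSolution f ft fv fvv)
    (hH : ∀ t, 0 ≤ t → HasDerivAt (fun s => BDY.relEntropy μ (f · s))
      (∫ v in Ioi 0, ft v t * (Real.log (f v t / BDY.gibbs μ v) + 1)) t) (t : ℝ) (ht : 0 ≤ t) :
    deriv (fun s => BDY.relEntropy μ (f · s)) t = -BDY.dissipation (f · t) (fv · t) ∧
      0 ≤ BDY.dissipation (f · t) (fv · t) := by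
  refine ⟨(hH t ht).deriv ▸ ?_, (hf.profile t ht).dissipation_nonneg⟩
  by_contra hne
  have hzero := (hf.integral_timeDeriv_mul_log_eq hμ ht).resolve_right hne
  have hD : BDY.dissipation (f · t) (fv · t) ≠ 0 := fun h => hne (by rw [hzero, h, neg_zero])
  obtain ⟨q, hq, c, hc, b, htb, hle⟩ := hf.exists_le_sq_fluxPotential_sub ht hD
  have hH' : ∀ s ∈ Icc t b, HasDerivAt (fun s => BDY.relEntropy μ (f · s)) _ s :=
    fun s hs => hH s (ht.trans hs.1)
  have hgap : ∀ s ∈ Icc t b, -BDY.dissipation (f · s) (fv · s) ≤ -c := fun s hs =>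
    neg_le_neg ((hle s hs).trans
      ((hf.profile s (ht.trans hs.1)).sq_fluxPotential_sub_le_dissipation hq))
  obtain ⟨s, hs, hs_ne⟩ := hf.exists_deriv_relEntropy_ne_zero hμ ht htb hH' hq hc hle
  exact hs_ne (BDY.deriv_eq_zero_of_deriv_gap htb.le hc hH'
    (fun r hr => (hf.integral_timeDeriv_mul_log_eq hμ (ht.trans hr.1)).imp_right
      fun h => h.trans_le (hgap r hr)) hzero s hs)

/-- **Entropy dissipation for the BDY PDE.**
Let `μ > 0`, let `f∞(v) = (1/μ) e^{−v/μ}` be the Boltzmann–Gibbs equilibrium, and let `f`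
be a strictly positive classical solution of the BDY PDE
`∂_t f = ∂_vv f + f(0,t) ∂_v f` with Robin boundary condition `∂_v f(0,t) + f(0,t)² = 0`,
which is for each `t` a probability density with mean `μ`, such that `f ln f` and
`(∂_v f)²/f` are integrable on `(0,∞)` for each `t`, `∂_v f ln f → 0` and `f ln f → 0` as
`v → ∞`, and such that the relative entropy `H[f|f∞](t) = ∫₀^∞ f ln(f/f∞) dv` is
differentiable in `t` with derivative obtained by differentiating under the integral sign.
Then for all `t ≥ 0`, `d/dt H[f|f∞](t) = − D[f](t) ≤ 0`, where
`D[f](t) = ∫₀^∞ (∂_v f + f(0,t) f)²/f dv`. In particular the relative entropy decreases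
monotonically in time. -/
theorem BDY_PDE_entropy_dissipation
    (μ : ℝ) (hμ : 0 < μ)
    (f ft fv fvv : ℝ → ℝ → ℝ)
    (hcont : ContinuousOn (fun p : ℝ × ℝ => f p.1 p.2) (Ici 0 ×ˢ Ici 0))
    (hfv : ∀ v t : ℝ, 0 ≤ v → 0 ≤ t → HasDerivAt (fun w => f w t) (fv v t) v)
    (hfvv : ∀ v t : ℝ, 0 ≤ v → 0 ≤ t → HasDerivAt (fun w => fv w t) (fvv v t) v)
    (hft : ∀ v t : ℝ, 0 ≤ v → 0 ≤ t → HasDerivAt (fun s => f v s) (ft v t) t)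
    (hpos : ∀ v t : ℝ, 0 ≤ v → 0 ≤ t → 0 < f v t)
    (hint : ∀ t : ℝ, 0 ≤ t → IntegrableOn (fun v => f v t) (Ioi 0))
    (hint_fv : ∀ t : ℝ, 0 ≤ t → IntegrableOn (fun v => fv v t) (Ioi 0))
    (hint_fvv : ∀ t : ℝ, 0 ≤ t → IntegrableOn (fun v => fvv v t) (Ioi 0))
    (hint_vf : ∀ t : ℝ, 0 ≤ t → IntegrableOn (fun v => v * f v t) (Ioi 0))
    (hmass : ∀ t : ℝ, 0 ≤ t → ∫ v in Ioi (0:ℝ), f v t = 1)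
    (hmean : ∀ t : ℝ, 0 ≤ t → ∫ v in Ioi (0:ℝ), v * f v t = μ)
    (hint_flogf : ∀ t : ℝ, 0 ≤ t →
      IntegrableOn (fun v => f v t * Real.log (f v t)) (Ioi 0))
    (hint_fisher : ∀ t : ℝ, 0 ≤ t →
      IntegrableOn (fun v => (fv v t) ^ 2 / f v t) (Ioi 0))
    (hdecay : ∀ t : ℝ, 0 ≤ t → Tendsto (fun v => f v t) atTop (nhds 0))
    (hdecay_fv : ∀ t : ℝ, 0 ≤ t → Tendsto (fun v => fv v t) atTop (nhds 0))
    (hdecay_fvlog : ∀ t : ℝ, 0 ≤ t →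
      Tendsto (fun v => fv v t * Real.log (f v t)) atTop (nhds 0))
    (hdecay_flog : ∀ t : ℝ, 0 ≤ t →
      Tendsto (fun v => f v t * Real.log (f v t)) atTop (nhds 0))
    (hPDE : ∀ v t : ℝ, 0 < v → 0 ≤ t → ft v t = fvv v t + f 0 t * fv v t)
    (hBC : ∀ t : ℝ, 0 ≤ t → fv 0 t + (f 0 t) ^ 2 = 0)
    -- differentiation under the integral sign, for the mass, the mean and the entropy
    (hDUImass : ∀ t : ℝ, 0 ≤ t →
      HasDerivAt (fun s => ∫ v in Ioi (0:ℝ), f v s) (∫ v in Ioi (0:ℝ), ft v t) t)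
    (hDUImean : ∀ t : ℝ, 0 ≤ t →
      HasDerivAt (fun s => ∫ v in Ioi (0:ℝ), v * f v s)
        (∫ v in Ioi (0:ℝ), v * ft v t) t)
    (hDUI : ∀ t : ℝ, 0 ≤ t →
      HasDerivAt
        (fun s => ∫ v in Ioi (0:ℝ),
          f v s * Real.log (f v s / ((1 / μ) * Real.exp (-v / μ))))
        (∫ v in Ioi (0:ℝ),
          ft v t * (Real.log (f v t / ((1 / μ) * Real.exp (-v / μ))) + 1)) t) :
    ∀ t : ℝ, 0 ≤ t →
      deriv
        (fun s => ∫ v in Ioi (0:ℝ),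
          f v s * Real.log (f v s / ((1 / μ) * Real.exp (-v / μ)))) t
        = -(∫ v in Ioi (0:ℝ), (fv v t + f 0 t * f v t) ^ 2 / f v t) ∧
      0 ≤ ∫ v in Ioi (0:ℝ), (fv v t + f 0 t * f v t) ^ 2 / f v t :=
  BDY_PDE_entropy_dissipation_general hμ
    ⟨fun t ht => ⟨fun v hv => hfv v t hv ht, fun v hv => hfvv v t hv ht,
      fun v hv => hpos v t hv ht, hint t ht, hint_fv t ht, hint_fvv t ht, hint_vf t ht, hmass t ht,
      hint_flogf t ht, hint_fisher t ht, hBC t ht⟩, hcont, hft, hPDE⟩ hDUI
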